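/- Let n ≥ 2 and let (B_m(t))_{m ≥ 0} be the family of polynomials in ℚ[t] determined by the formal power series identities B_m(t) = (1−t)^{m+1} · Σ_{k ≥ 0} (2k+1)^m t^k for every m ≥ 0. If n is a power of 2, then n · Σ_{π ∈ 𝔠_n} 4^{lpk(π)} t^{lpk(π)} (1+t)^{n−2·lpk(π)} = B_n(t) − (1−t)^n; otherwise, n · Σ_{π ∈ 𝔠_n} 4^{lpk(π)} t^{lpk(π)} (1+t)^{n−2·lpk(π)} = Σ_{d ∣ n, d odd} μ(d) (1−t)^{n−n/d} B_{n/d}(t). (These are the formulas n(1+t)^n C_n^{lpk}(4t/(1+t)²) = B_n(t) − (1−t)^n and n(1+t)^n C_n^{lpk}(4t/(1+t)²) = Σ_{d ∣ n, d odd} μ(d)(1−t)^{n−n/d} B_{n/d}(t), where C_n^{lpk}(t) = Σ_{π ∈ 𝔠_n} t^{lpk(π)}, with denominators cleared; note 2·lpk(π) ≤ n for every π ∈ S_n.) -/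

import Mathlib

open scoped Classical

noncomputable section

def oneLine (n : ℕ) (π : Equiv.Perm (Fin n)) (i : ℕ) : ℕ :=
  if h : 1 ≤ i ∧ i ≤ n then (π ⟨i - 1, by omega⟩).val + 1 else 0

def des (n : ℕ) (π : Equiv.Perm (Fin n)) : ℕ :=
  ((Finset.Icc 1 (n - 1)).filter fun i => oneLine n π (i + 1) < oneLine n π i).card

def pk (n : ℕ) (π : Equiv.Perm (Fin n)) : ℕ :=
  ((Finset.Icc 2 (n - 1)).filter fun i =>
    oneLine n π (i - 1) < oneLine n π i ∧ oneLine n π (i + 1) < oneLine n π i).card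

def lpk (n : ℕ) (π : Equiv.Perm (Fin n)) : ℕ :=
  ((Finset.Icc 1 (n - 1)).filter fun i =>
    oneLine n π (i - 1) < oneLine n π i ∧ oneLine n π (i + 1) < oneLine n π i).card

def pval (n : ℕ) (π : Equiv.Perm (Fin n)) : ℕ :=
  ((Finset.Icc 2 (n - 1)).filter fun i =>
    oneLine n π i < oneLine n π (i - 1) ∧ oneLine n π i < oneLine n π (i + 1)).card

def udr (n : ℕ) (π : Equiv.Perm (Fin n)) : ℕ := lpk n π + pval n π + 1

def fullCycleType (n : ℕ) (π : Equiv.Perm (Fin n)) : Multiset ℕ :=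
  π.cycleType + Multiset.replicate (n - π.support.card) 1

def numCycles (n : ℕ) (π : Equiv.Perm (Fin n)) : ℕ := Multiset.card (fullCycleType n π)

def numOddCycles (n : ℕ) (π : Equiv.Perm (Fin n)) : ℕ :=
  Multiset.card ((fullCycleType n π).filter fun p => p % 2 = 1)

def IsCyclicPerm (n : ℕ) (π : Equiv.Perm (Fin n)) : Prop :=
  fullCycleType n π = {n}

def cyclicSet (n : ℕ) : Finset (Equiv.Perm (Fin n)) :=
  Finset.univ.filter fun π => IsCyclicPerm n π

def invSet (n : ℕ) : Finset (Equiv.Perm (Fin n)) :=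
  Finset.univ.filter fun π => π ^ 2 = 1

def eulerianA (m : ℕ) : Polynomial ℚ :=
  ∑ π : Equiv.Perm (Fin m), Polynomial.X ^ (des m π + 1)

def peakP (m : ℕ) : Polynomial ℚ :=
  ∑ π : Equiv.Perm (Fin m), Polynomial.X ^ (pk m π + 1)

def leftPeakP (m : ℕ) : Polynomial ℚ :=
  ∑ π : Equiv.Perm (Fin m), Polynomial.X ^ (lpk m π)

def cnk (n k : ℕ) : ℕ :=
  (Finset.univ.filter fun π : Equiv.Perm (Fin n) =>
    (∀ p ∈ fullCycleType n π, ¬ (4 ∣ p)) ∧ numCycles n (π ^ 2) = k).card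

def bnk (n k : ℕ) : ℕ :=
  (Finset.univ.filter fun π : Equiv.Perm (Fin n) => numCycles n (π ^ 2) = k).card

def dnk (n k : ℕ) : ℕ :=
  (Finset.univ.filter fun π : Equiv.Perm (Fin n) => numOddCycles n (π ^ 2) = k).card

/-- step relation: `s` says that the step is a descent -/
def stepR (s : Prop) (a b : ℕ) : Prop := a < b ∨ (a = b ∧ (Even a ↔ ¬ s))

def Acnt (s : ℕ → Prop) : ℕ → ℕ → ℕ
  | 0, _ => 1
  | i + 1, q => ∑ a ∈ (Finset.range (q + 1)).filter (fun a => stepR (s (i + 1)) a q), Acnt s i a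

lemma Acnt_succ (s : ℕ → Prop) (i q : ℕ) : Acnt s (i + 1) q =
    ∑ a ∈ (Finset.range (q + 1)).filter (fun a => stepR (s (i + 1)) a q), Acnt s i a := rfl

lemma Acnt_eq_full (s : ℕ → Prop) (i q : ℕ) (h : Even q ↔ ¬ s (i + 1)) :
    Acnt s (i + 1) q = ∑ a ∈ Finset.range (q + 1), Acnt s i a := by
  rw [Acnt_succ, Finset.filter_true_of_mem]
  intro a ha
  rw [Finset.mem_range] at ha
  rcases Nat.lt_or_ge a q with h1 | h1
  · exact Or.inl h1
  · have : a = q := by omega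
    subst this
    exact Or.inr ⟨rfl, h⟩

lemma Acnt_eq_part (s : ℕ → Prop) (i q : ℕ) (h : ¬ (Even q ↔ ¬ s (i + 1))) :
    Acnt s (i + 1) q = ∑ a ∈ Finset.range q, Acnt s i a := by
  rw [Acnt_succ, Finset.sum_filter, Finset.sum_range_succ, if_neg, add_zero]
  · apply Finset.sum_congr rfl
    intro a ha
    rw [Finset.mem_range] at ha
    exact if_pos (Or.inl ha)
  · rintro (h1 | ⟨_, h1⟩)
    · omega
    · exact h h1

def Apos (s : ℕ → Prop) (i : ℕ) : PowerSeries ℚ := PowerSeries.mk fun k => (Acnt s i (2 * k) : ℚ)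
def Aneg (s : ℕ → Prop) (i : ℕ) : PowerSeries ℚ :=
  PowerSeries.X * PowerSeries.mk fun k => (Acnt s i (2 * k + 1) : ℚ)

lemma one_sub_mul_ext (F G : PowerSeries ℚ)
    (h0 : PowerSeries.coeff 0 F = PowerSeries.coeff 0 G)
    (h : ∀ k, PowerSeries.coeff (k + 1) F = PowerSeries.coeff k F + PowerSeries.coeff (k + 1) G) :
    (1 - PowerSeries.X) * F = G := by
  ext k
  rw [sub_mul, one_mul, map_sub]
  cases k with
  | zero => simp [← h0]
  | succ k => rw [PowerSeries.coeff_succ_X_mul, h k]; ring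

lemma Apos_asc (s : ℕ → Prop) (i : ℕ) (h : ¬ s (i + 1)) :
    (1 - PowerSeries.X) * Apos s (i + 1) = Apos s i + Aneg s i := by
  apply one_sub_mul_ext
  · simp only [Apos, Aneg, PowerSeries.coeff_mk, map_add, PowerSeries.coeff_zero_X_mul]
    rw [Acnt_eq_full _ _ _ (by simp [h])]; simp
  · intro k
    simp only [Apos, Aneg, PowerSeries.coeff_mk, map_add, PowerSeries.coeff_succ_X_mul]
    rw [Acnt_eq_full _ _ _ (by simp [h]), Acnt_eq_full _ _ _ (by simp [h]),
      show 2 * (k + 1) + 1 = 2 * k + 1 + 1 + 1 by ring, Finset.sum_range_succ,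
      Finset.sum_range_succ, show 2 * (k + 1) = 2 * k + 1 + 1 by ring]
    push_cast; ring

lemma Aneg_asc (s : ℕ → Prop) (i : ℕ) (h : ¬ s (i + 1)) :
    Aneg s (i + 1) = PowerSeries.X * Apos s (i + 1) := by
  unfold Aneg Apos
  congr 1
  ext k
  simp only [PowerSeries.coeff_mk]
  rw [Acnt_eq_full _ _ (2 * k) (by simp [h]), Acnt_eq_part _ _ (2 * k + 1) (by simp [h])]

lemma Aneg_desc (s : ℕ → Prop) (i : ℕ) (h : s (i + 1)) :
    Aneg s (i + 1) = Apos s (i + 1) := by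
  unfold Aneg Apos
  ext k
  cases k with
  | zero => 
    simp only [PowerSeries.coeff_mk, PowerSeries.coeff_zero_X_mul]
    rw [Acnt_eq_part _ _ _ (by simp [h])]; simp
  | succ k =>
    simp only [PowerSeries.coeff_mk, PowerSeries.coeff_succ_X_mul]
    rw [Acnt_eq_part _ _ (2 * (k + 1)) (by simp [h]), Acnt_eq_full _ _ (2 * k + 1) (by simp [h])]
    rfl

lemma Apos_desc (s : ℕ → Prop) (i : ℕ) (h : s (i + 1)) :
    (1 - PowerSeries.X) * Apos s (i + 1) = PowerSeries.X * Apos s i + Aneg s i := by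
  apply one_sub_mul_ext
  · simp only [Apos, Aneg, PowerSeries.coeff_mk, map_add, PowerSeries.coeff_zero_X_mul]
    rw [Acnt_eq_part _ _ _ (by simp [h])]; simp
  · intro k
    simp only [Apos, Aneg, PowerSeries.coeff_mk, map_add, PowerSeries.coeff_succ_X_mul]
    rw [Acnt_eq_part _ _ _ (by simp [h]), Acnt_eq_part _ _ _ (by simp [h]),
      show 2 * (k + 1) = 2 * k + 1 + 1 by ring, Finset.sum_range_succ,
      Finset.sum_range_succ]
    push_cast; ring

/-- number of ascent-descent transitions -/
def adTr (s : ℕ → Prop) (i : ℕ) : ℕ :=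
  ((Finset.Icc 1 i).filter fun j => ¬ s (j - 1) ∧ s j).card

lemma adTr_succ (s : ℕ → Prop) (i : ℕ) :
    adTr s (i + 1) = adTr s i + if ¬ s i ∧ s (i + 1) then 1 else 0 := by
  unfold adTr
  rw [← Finset.insert_Icc_right_eq_Icc_add_one (by omega), Finset.filter_insert]
  simp only [Nat.add_sub_cancel]
  split_ifs with h
  · rw [Finset.card_insert_of_notMem]; simp
  · rfl

lemma Apos_inv (s : ℕ → Prop) (h0 : ¬ s 0) (i : ℕ) :
    (¬ s i → Aneg s i = PowerSeries.X * Apos s i ∧ ∃ r, i = 2 * adTr s i + r ∧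
      (1 - PowerSeries.X) ^ (i + 1) * Apos s i =
        (4 * PowerSeries.X) ^ adTr s i * (1 + PowerSeries.X) ^ r) ∧
    (s i → Aneg s i = Apos s i ∧ ∃ p r, adTr s i = p + 1 ∧ i = 2 * p + 1 + r ∧
      (1 - PowerSeries.X) ^ (i + 1) * Apos s i =
        2 * PowerSeries.X * (4 * PowerSeries.X) ^ p * (1 + PowerSeries.X) ^ r) := by
  induction i with
  | zero =>
    refine ⟨fun _ => ⟨?_, 0, ?_, ?_⟩, fun h => absurd h h0⟩
    · rfl
    · rfl
    · simp only [adTr, zero_add, pow_one]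
      apply one_sub_mul_ext
      · simp [Apos, Acnt]
      · intro k; simp [Apos, Acnt, PowerSeries.coeff_one]
  | succ i ih =>
    refine ⟨fun h => ⟨Aneg_asc s i h, ?_⟩, fun h => ⟨Aneg_desc s i h, ?_⟩⟩
    · rw [pow_succ, mul_assoc, Apos_asc s i h]
      by_cases hi : s i
      · obtain ⟨h1, p, r, h2, h3, h4⟩ := ih.2 hi
        have ht : adTr s (i + 1) = p + 1 := by rw [adTr_succ, h2]; simp [hi]
        refine ⟨r, by omega, ?_⟩
        rw [h1, ht]; linear_combination 2 * h4
      · obtain ⟨h1, r, h3, h4⟩ := ih.1 hi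
        have ht : adTr s (i + 1) = adTr s i := by rw [adTr_succ]; simp [h]
        refine ⟨r + 1, by omega, ?_⟩
        rw [h1, ht]; linear_combination (1 + PowerSeries.X) * h4
    · rw [pow_succ, mul_assoc, Apos_desc s i h]
      by_cases hi : s i
      · obtain ⟨h1, p, r, h2, h3, h4⟩ := ih.2 hi
        have ht : adTr s (i + 1) = p + 1 := by rw [adTr_succ, h2]; simp [hi]
        refine ⟨p, r + 1, ht, by omega, ?_⟩
        rw [h1]; linear_combination (1 + PowerSeries.X) * h4
      · obtain ⟨h1, r, h3, h4⟩ := ih.1 hi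
        have ht : adTr s (i + 1) = adTr s i + 1 := by rw [adTr_succ]; simp [h, hi]
        refine ⟨adTr s i, r, ht, by omega, ?_⟩
        rw [h1]; linear_combination (2 * PowerSeries.X) * h4

/-- good sequences followed by letter `q` -/
def goodSeq (s : ℕ → Prop) (i : ℕ) (f : Fin i → ℕ) (q : ℕ) : Prop :=
  ∀ j : Fin i, stepR (s (j.val + 1)) (f j) (if h : j.val + 1 < i then f ⟨j.val + 1, h⟩ else q)

lemma goodSeq_snoc (s : ℕ → Prop) (i : ℕ) (f : Fin i → ℕ) (a q : ℕ) :
    goodSeq s (i + 1) (Fin.snoc f a : Fin (i + 1) → ℕ) q ↔ goodSeq s i f a ∧ stepR (s (i + 1)) a q := by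
  unfold goodSeq
  rw [Fin.forall_fin_succ']
  apply and_congr
  · apply forall_congr'
    intro j
    simp only [Fin.val_castSucc, Fin.snoc_castSucc]
    rw [dif_pos (by omega)]
    by_cases h : j.val + 1 < i
    · rw [dif_pos h]
      have : (⟨j.val + 1, by omega⟩ : Fin (i + 1)) = Fin.castSucc ⟨j.val + 1, h⟩ := rfl
      rw [this, Fin.snoc_castSucc]
    · rw [dif_neg h]
      have : (⟨j.val + 1, by omega⟩ : Fin (i + 1)) = Fin.last i := by
        ext; simp; omega
      rw [this, Fin.snoc_last]
  · simp

lemma goodSeq_card (s : ℕ → Prop) (K : ℕ) (i : ℕ) (q : ℕ) (hq : q < K) :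
    (Finset.univ.filter fun f : Fin i → Fin K => goodSeq s i (fun j => (f j).val) q).card
      = Acnt s i q := by
  induction i generalizing q with
  | zero =>
    rw [Finset.filter_true_of_mem]
    · simp [Acnt]
    · intro f _ j; exact j.elim0
  | succ i ih =>
    rw [Acnt_succ, Finset.card_filter, ← (Fin.snocEquiv (fun _ => Fin K)).sum_comp,
      Fintype.sum_prod_type]
    have key : ∀ (a : Fin K) (f : Fin i → Fin K),
        goodSeq s (i + 1) (fun j => ((Fin.snocEquiv (fun _ : Fin (i+1) => Fin K)) (a, f) j).val) q ↔
        goodSeq s i (fun j => (f j).val) a.val ∧ stepR (s (i + 1)) a.val q := by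
      intro a f
      rw [← goodSeq_snoc]
      have : (fun j => ((Fin.snocEquiv (fun _ : Fin (i+1) => Fin K)) (a, f) j).val) =
        (Fin.snoc (fun j => (f j).val) a.val : Fin (i + 1) → ℕ) := by
        ext j
        refine Fin.lastCases ?_ (fun j => ?_) j
        · simp [Fin.snocEquiv]
        · simp [Fin.snocEquiv]
      rw [this]
    simp only [key]
    have h2 : ∀ a : Fin K, (∑ f : Fin i → Fin K, if goodSeq s i (fun j => (f j).val) a.val ∧ stepR (s (i + 1)) a.val q then 1 else 0) = if stepR (s (i + 1)) a.val q then Acnt s i a.val else 0 := by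
      intro a
      rw [← ih a.val a.isLt, Finset.card_filter]
      by_cases h : stepR (s (i + 1)) a.val q <;> simp [h]
    rw [Finset.sum_congr rfl (fun a _ => h2 a),
      Fin.sum_univ_eq_sum_range (fun a => if stepR (s (i + 1)) a q then Acnt s i a else 0) K,
      ← Finset.sum_filter]
    apply Finset.sum_congr _ (fun _ _ => rfl)
    ext a
    simp only [Finset.mem_filter, Finset.mem_range]
    constructor
    · rintro ⟨h1, h2⟩
      refine ⟨?_, h2⟩
      rcases h2 with h | h <;> omega
    · rintro ⟨h1, h2⟩
      exact ⟨by omega, h2⟩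

def descStep (n : ℕ) (π : Equiv.Perm (Fin n)) (i : ℕ) : Prop :=
  1 ≤ i ∧ i + 1 ≤ n ∧ oneLine n π (i + 1) < oneLine n π i

lemma oneLine_inj (n : ℕ) (π : Equiv.Perm (Fin n)) (i j : ℕ) (hi : 1 ≤ i ∧ i ≤ n)
    (hj : 1 ≤ j ∧ j ≤ n) (h : oneLine n π i = oneLine n π j) : i = j := by
  simp only [oneLine, dif_pos hi, dif_pos hj, add_left_inj] at h
  have := π.injective (Fin.ext h)
  simp at this
  omega

lemma lpk_eq_trans (n : ℕ) (hn : 2 ≤ n) (π : Equiv.Perm (Fin n)) :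
    adTr (descStep n π) n = lpk n π := by
  obtain ⟨m, rfl⟩ : ∃ m, n = m + 1 := ⟨n - 1, by omega⟩
  rw [adTr_succ, if_neg (by simp [descStep]), add_zero]
  unfold adTr lpk
  congr 1
  apply Finset.filter_congr
  intro j hj
  simp only [Nat.add_sub_cancel, Finset.mem_Icc] at hj ⊢
  have h1 : descStep (m + 1) π j ↔ oneLine (m + 1) π (j + 1) < oneLine (m + 1) π j := by
    simp only [descStep]; constructor
    · exact fun h => h.2.2
    · exact fun h => ⟨by omega, by omega, h⟩
  rw [h1]
  apply and_congr_left
  intro _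
  simp only [descStep, not_and, not_lt]
  by_cases hj1 : j = 1
  · subst hj1
    simp [oneLine]
  · have e : j - 1 + 1 = j := by omega
    rw [e]
    constructor
    · intro h
      have h3 := h (by omega) (by omega)
      have h4 := fun h => oneLine_inj (m + 1) π (j - 1) j (by omega) (by omega) h
      by_contra h5
      have := h4 (by omega)
      omega
    · intro h _ _
      omega

/-- compatibility on adjacent positions -/
def adjCompat (n K : ℕ) (π : Equiv.Perm (Fin n)) (f : Fin n → Fin K) : Prop :=
  ∀ (i : ℕ) (h : i + 1 < n),
    stepR (π ⟨i + 1, h⟩ < π ⟨i, by omega⟩) (f ⟨i, by omega⟩).val (f ⟨i + 1, h⟩).val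

lemma adjCompat_iff (n k : ℕ) (π : Equiv.Perm (Fin n)) (f : Fin n → Fin (2 * k + 1)) :
    adjCompat n (2 * k + 1) π f ↔ goodSeq (descStep n π) n (fun j => (f j).val) (2 * k) := by
  have hd : ∀ (i : ℕ) (h : i + 1 < n),
      descStep n π (i + 1) ↔ π ⟨i + 1, h⟩ < π ⟨i, by omega⟩ := by
    intro i h
    unfold descStep oneLine
    rw [dif_pos (by omega), dif_pos (by omega)]
    simp only [Nat.add_sub_cancel, add_lt_add_iff_right, Fin.val_fin_lt]
    constructor
    · exact fun h => h.2.2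
    · exact fun h => ⟨by omega, by omega, h⟩
  constructor
  · intro h j
    by_cases hj : j.val + 1 < n
    · rw [dif_pos hj, hd _ hj]
      exact h j.val hj
    · rw [dif_neg hj]
      have h2 : ¬ descStep n π (j.val + 1) := by unfold descStep; omega
      rcases Nat.lt_or_ge (f j).val (2 * k) with h1 | h1
      · exact Or.inl h1
      · have : (f j).val = 2 * k := by omega
        exact Or.inr ⟨this, by simp [this, h2]⟩
  · intro h i hi
    have := h ⟨i, by omega⟩
    rw [dif_pos hi, hd _ hi] at this
    exact this

lemma adjCompat_gf (n : ℕ) (hn : 2 ≤ n) (π : Equiv.Perm (Fin n)) :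
    (4 : PowerSeries ℚ) ^ lpk n π * PowerSeries.X ^ lpk n π
      * (1 + PowerSeries.X) ^ (n - 2 * lpk n π) =
    (1 - PowerSeries.X) ^ (n + 1) * PowerSeries.mk fun k =>
      (((Finset.univ.filter fun f : Fin n → Fin (2 * k + 1) =>
        adjCompat n (2 * k + 1) π f).card : ℕ) : ℚ) := by
  have h1 := (Apos_inv (descStep n π) (by simp [descStep]) n).1 (by simp [descStep])
  obtain ⟨-, r, h2, h3⟩ := h1
  rw [lpk_eq_trans n hn] at h2 h3
  rw [← mul_pow, show n - 2 * lpk n π = r by omega, ← h3]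
  congr 1
  unfold Apos
  congr 1
  ext k
  rw [← goodSeq_card _ (2 * k + 1) n (2 * k) (by omega)]
  simp only [adjCompat_iff]
lemma stepR_trans {n : ℕ} (x y z : Fin n) (a b c : ℕ)
    (h1 : stepR (y < x) a b) (h2 : stepR (z < y) b c) : stepR (z < x) a c := by
  rcases h1 with h1 | ⟨rfl, h1⟩
  · rcases h2 with h2 | ⟨rfl, h2⟩
    · exact Or.inl (by omega)
    · exact Or.inl h1
  · rcases h2 with h2 | ⟨rfl, h2⟩
    · exact Or.inl h2
    · refine Or.inr ⟨rfl, ?_⟩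
      by_cases he : Even a
      · simp only [he, true_iff, not_lt] at h1 h2 ⊢
        exact h1.trans h2
      · simp only [he, false_iff, not_not] at h1 h2 ⊢
        exact h2.trans h1

lemma adjCompat_glob (n K : ℕ) (π : Equiv.Perm (Fin n)) (f : Fin n → Fin K) :
    adjCompat n K π f ↔ ∀ i j : Fin n, i < j → stepR (π j < π i) (f i).val (f j).val := by
  constructor
  · intro h
    have key : ∀ (d i : ℕ) (hd : i + d + 1 < n), stepR (π ⟨i + d + 1, hd⟩ < π ⟨i, by omega⟩)
        (f ⟨i, by omega⟩).val (f ⟨i + d + 1, hd⟩).val := by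
      intro d
      induction d with
      | zero => intro i hd; exact h i hd
      | succ d ih =>
        intro i hd
        exact stepR_trans _ (π ⟨i + d + 1, by omega⟩) _ _ _ _ (ih i (by omega))
          (h (i + d + 1) hd)
    intro i j hij
    have := key (j.val - i.val - 1) i.val (by omega)
    have e : (⟨i.val + (j.val - i.val - 1) + 1, by omega⟩ : Fin n) = j := by ext; simp; omega
    rw [e] at this
    exact this
  · intro h i hi
    exact h _ _ (by simp)

/-- compatibility of a labelling of the cycle with a word -/
def wCompat (n K : ℕ) (φ : ZMod n ≃ Fin n) (W : ZMod n → Fin K) : Prop :=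
  ∀ i j, φ i < φ j → stepR (φ (j + 1) < φ (i + 1)) (W i).val (W j).val

def conjCyc (n : ℕ) (φ : ZMod n ≃ Fin n) : Equiv.Perm (Fin n) :=
  φ.symm.trans ((Equiv.addRight (1 : ZMod n)).trans φ)

lemma adjCompat_conj (n K : ℕ) (φ : ZMod n ≃ Fin n) (W : ZMod n → Fin K) :
    adjCompat n K (conjCyc n φ) (W ∘ φ.symm) ↔ wCompat n K φ W := by
  rw [adjCompat_glob]
  constructor
  · intro h i j hij
    have := h (φ i) (φ j) hij
    simpa [conjCyc] using this
  · intro h i j hij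
    have := h (φ.symm i) (φ.symm j) (by simpa using hij)
    simpa [conjCyc] using this

lemma sum_swap (n K : ℕ) [NeZero n] :
    ∑ φ : ZMod n ≃ Fin n, (Finset.univ.filter fun f : Fin n → Fin K =>
        adjCompat n K (conjCyc n φ) f).card =
    ∑ W : ZMod n → Fin K, (Finset.univ.filter fun φ : ZMod n ≃ Fin n => wCompat n K φ W).card := by
  simp only [Finset.card_filter]
  conv_rhs => rw [Finset.sum_comm]
  apply Finset.sum_congr rfl
  intro φ _
  rw [← (Equiv.arrowCongr φ (Equiv.refl (Fin K))).sum_comp]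
  apply Finset.sum_congr rfl
  intro W _
  have : (Equiv.arrowCongr φ (Equiv.refl (Fin K))) W = W ∘ φ.symm := by ext; simp
  rw [this]
  simp only [adjCompat_conj]
lemma isCyclicPerm_iff (n : ℕ) (hn : 2 ≤ n) (π : Equiv.Perm (Fin n)) :
    IsCyclicPerm n π ↔ π.cycleType = {n} := by
  unfold IsCyclicPerm fullCycleType
  constructor
  · intro h
    have h1 : n ∈ π.cycleType + Multiset.replicate (n - π.support.card) 1 := by rw [h]; simp
    rw [Multiset.mem_add] at h1
    have h2 : n ∈ π.cycleType := by
      rcases h1 with h1 | h1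
      · exact h1
      · have := Multiset.eq_of_mem_replicate h1; omega
    have h3 : ({n} : Multiset ℕ) ≤ π.cycleType := by simpa using h2
    apply le_antisymm _ h3
    calc π.cycleType ≤ π.cycleType + Multiset.replicate (n - π.support.card) 1 :=
          Multiset.le_add_right _ _
      _ = _ := h
  · intro h
    have : π.support.card = n := by rw [← Equiv.Perm.sum_cycleType, h]; simp
    rw [h, this]; simp

lemma conj_fiber_card {α : Type*} [Fintype α] [DecidableEq α] (c π : Equiv.Perm α)
    (h : IsConj c π) : (Finset.univ.filter fun σ : Equiv.Perm α => σ * c * σ⁻¹ = π).card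
      = Nat.card (Subgroup.centralizer {c}) := by
  rw [isConj_iff] at h
  obtain ⟨s, rfl⟩ := h
  rw [Nat.card_eq_fintype_card, ← Fintype.card_coe]
  apply Fintype.card_congr
  refine ⟨fun σ => ⟨s⁻¹ * σ.1, ?_⟩, fun z => ⟨s * z.1, ?_⟩, ?_, ?_⟩
  · have h1 := (Finset.mem_filter.1 σ.2).2
    rw [Subgroup.mem_centralizer_singleton_iff]
    have h2 : σ.1 * c = s * c * s⁻¹ * σ.1 := mul_inv_eq_iff_eq_mul.1 h1
    calc _ = s⁻¹ * (σ.1 * c) := by group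
      _ = _ := by rw [h2]; group
  · have h1 := z.2
    rw [Subgroup.mem_centralizer_singleton_iff] at h1
    simp only [Finset.mem_filter, Finset.mem_univ, true_and]
    calc _ = s * (z.1 * c) * z.1⁻¹ * s⁻¹ := by group
      _ = _ := by rw [h1]; group
  · intro σ; simp
  · intro z; simp

lemma sum_conj (n : ℕ) (hn : 2 ≤ n) [NeZero n] (G : Equiv.Perm (Fin n) → PowerSeries ℚ) :
    ∑ φ : ZMod n ≃ Fin n, G (conjCyc n φ) = (n : PowerSeries ℚ) * ∑ π ∈ cyclicSet n, G π := by
  obtain ⟨m, rfl⟩ : ∃ m, n = m + 2 := ⟨n - 2, by omega⟩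
  have h1 : ∑ φ : ZMod (m + 2) ≃ Fin (m + 2), G (conjCyc (m + 2) φ) =
      ∑ σ : Equiv.Perm (Fin (m + 2)), G (σ * finRotate (m + 2) * σ⁻¹) := by
    apply Fintype.sum_equiv (Equiv.refl _ : (ZMod (m + 2) ≃ Fin (m + 2)) ≃ Equiv.Perm (Fin (m + 2)))
    intro φ
    congr 1
    ext x
    have h := finRotate_apply (n := m + 2) (φ.symm x)
    change (φ (φ.symm x + 1)).val = (φ (finRotate (m + 2) (φ.symm x))).val
    rw [h]
    rfl
  have hc : (finRotate (m + 2)).cycleType = {m + 2} := cycleType_finRotate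
  have hmem : ∀ π, π ∈ cyclicSet (m + 2) ↔ IsConj (finRotate (m + 2)) π := by
    intro π
    simp only [cyclicSet, Finset.mem_filter, Finset.mem_univ, true_and]
    rw [isCyclicPerm_iff _ hn, Equiv.Perm.isConj_iff_cycleType_eq, hc, eq_comm]
  rw [h1, ← Finset.sum_fiberwise_of_maps_to (s := Finset.univ) (t := cyclicSet (m + 2))
    (g := fun σ => σ * finRotate (m + 2) * σ⁻¹), Finset.mul_sum]
  · apply Finset.sum_congr rfl
    intro π hπ
    rw [Finset.sum_congr rfl (g := fun _ => G π)]
    · rw [Finset.sum_const]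
      have h2 := conj_fiber_card _ _ ((hmem π).1 hπ)
      rw [Equiv.Perm.nat_card_centralizer, hc] at h2
      simp at h2
      have h3 : (Finset.univ.filter fun σ : Equiv.Perm (Fin (m + 2)) =>
        σ * finRotate (m + 2) * σ⁻¹ = π).card = m + 2 := by
        convert h2 using 2
      rw [h3, nsmul_eq_mul]
    · intro σ hσ
      rw [(Finset.mem_filter.1 hσ).2]
  · intro σ _
    rw [hmem, isConj_iff]
    exact ⟨σ, rfl⟩
def sg {n K : ℕ} (W : ZMod n → Fin K) (i : ZMod n) (l : ℕ) : ℤ :=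
  ∏ t ∈ Finset.range l, (-1 : ℤ) ^ (W (i + (t : ZMod n))).val

lemma sg_zero {n K : ℕ} (W : ZMod n → Fin K) (i : ZMod n) : sg W i 0 = 1 := by simp [sg]

lemma sg_succ {n K : ℕ} (W : ZMod n → Fin K) (i : ZMod n) (l : ℕ) :
    sg W i (l + 1) = (-1 : ℤ) ^ (W i).val * sg W (i + 1) l := by
  unfold sg
  rw [Finset.prod_range_succ', mul_comm]
  congr 1
  · simp
  · apply Finset.prod_congr rfl
    intro t _
    push_cast
    rw [show i + ((t : ZMod n) + 1) = i + 1 + t by ring]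

lemma sg_succ' {n K : ℕ} (W : ZMod n → Fin K) (i : ZMod n) (l : ℕ) :
    sg W i (l + 1) = sg W i l * (-1 : ℤ) ^ (W (i + l)).val := by
  unfold sg
  rw [Finset.prod_range_succ]

lemma sg_add {n K : ℕ} (W : ZMod n → Fin K) (i : ZMod n) (l m : ℕ) :
    sg W i (l + m) = sg W i l * sg W (i + l) m := by
  unfold sg
  rw [Finset.prod_range_add]
  congr 1
  apply Finset.prod_congr rfl
  intro t _
  push_cast
  rw [add_assoc]

lemma sg_or {n K : ℕ} (W : ZMod n → Fin K) (i : ZMod n) (l : ℕ) :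
    sg W i l = 1 ∨ sg W i l = -1 := by
  induction l with
  | zero => left; simp [sg]
  | succ l ih =>
    rw [sg_succ']
    rcases ih with h | h <;> rcases neg_one_pow_eq_or ℤ (W (i + l)).val with h' | h' <;>
      simp [h, h']

lemma sg_congr {n K : ℕ} (W : ZMod n → Fin K) (i j : ZMod n) (l : ℕ)
    (h : ∀ t < l, W (i + (t : ZMod n)) = W (j + (t : ZMod n))) : sg W i l = sg W j l := by
  unfold sg
  apply Finset.prod_congr rfl
  intro t ht
  rw [h t (Finset.mem_range.1 ht)]

lemma wCompat_iter {n K : ℕ} (φ : ZMod n ≃ Fin n) (W : ZMod n → Fin K) (hφ : wCompat n K φ W)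
    (hn : 2 ≤ n)
    (l : ℕ) : ∀ i j, φ i < φ j → (∀ t < l, W (i + (t : ZMod n)) = W (j + (t : ZMod n))) →
      (sg W i l = 1 → φ (i + l) < φ (j + l)) ∧ (sg W i l = -1 → φ (j + l) < φ (i + l)) := by
  induction l with
  | zero => intro i j hij _; simp [sg, hij]
  | succ l ih =>
    intro i j hij h
    have h1 : W i = W j := by simpa using h 0 (by omega)
    have h2 : ∀ t < l, W (i + 1 + (t : ZMod n)) = W (j + 1 + (t : ZMod n)) := by
      intro t ht
      have := h (t + 1) (by omega)
      push_cast at this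
      rw [show i + 1 + (t : ZMod n) = i + (t + 1) by ring, this]
      congr 1; ring
    have h3 := hφ i j hij
    rw [h1] at h3
    have h4 : Even (W j).val ↔ ¬ φ (j + 1) < φ (i + 1) := by
      rcases h3 with h3 | h3
      · omega
      · exact h3.2
    have hne : φ (i + 1) ≠ φ (j + 1) := by
      intro he
      have h6 : i + 1 = j + 1 := φ.injective he
      have h5 : i = j := add_right_cancel h6
      rw [h5] at hij
      exact lt_irrefl _ hij
    rw [sg_succ, h1]
    push_cast
    rw [show i + ((l : ZMod n) + 1) = i + 1 + l by ring, show j + ((l : ZMod n) + 1) = j + 1 + l by ring]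
    by_cases he : Even (W j).val
    · rw [he.neg_one_pow, one_mul]
      have h5 : φ (i + 1) < φ (j + 1) := lt_of_le_of_ne (not_lt.1 (h4.1 he)) hne
      exact ih _ _ h5 h2
    · have h5 : φ (j + 1) < φ (i + 1) := by
        by_contra h5; exact he (h4.2 h5)
      rw [(Nat.not_even_iff_odd.1 he).neg_one_pow]
      have h6 := ih _ _ h5 (fun t ht => (h2 t ht).symm)
      have h7 := sg_congr W (i + 1) (j + 1) l h2
      rw [h7]
      constructor
      · intro h8; exact h6.2 (by linarith)
      · intro h8; exact h6.1 (by linarith)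

lemma equiv_eq_of_mono {α : Type*} {n : ℕ} (φ ψ : α ≃ Fin n) (h : ∀ i j, φ i < φ j → ψ i < ψ j) :
    φ = ψ := by
  have hm : StrictMono (φ.symm.trans ψ) := by
    intro a b hab
    exact h _ _ (by simpa using hab)
  have h1 : (hm.orderIsoOfSurjective _ (φ.symm.trans ψ).surjective) = OrderIso.refl (Fin n) :=
    Subsingleton.elim _ _
  ext i : 1
  have h2 := congrArg (fun e : Fin n ≃o Fin n => e (φ i)) h1
  simp at h2
  exact h2.symm

lemma wCompat_unique {n K : ℕ} (hn : 2 ≤ n) (φ ψ : ZMod n ≃ Fin n) (W : ZMod n → Fin K)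
    (hφ : wCompat n K φ W) (hψ : wCompat n K ψ W)
    (h : ∀ i j, i ≠ j → (∀ l : ℕ, W (i + (l : ZMod n)) = W (j + (l : ZMod n))) →
      φ i < φ j → ψ i < ψ j) : φ = ψ := by
  apply equiv_eq_of_mono
  intro i j hij
  have hne : i ≠ j := by rintro rfl; exact lt_irrefl _ hij
  by_cases hw : ∀ l : ℕ, W (i + (l : ZMod n)) = W (j + (l : ZMod n))
  · exact h i j hne hw hij
  by_contra hc
  have hji : ψ j < ψ i := lt_of_le_of_ne (not_lt.1 hc) (fun he => hne (ψ.injective he).symm)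
  push Not at hw
  classical
  let l := Nat.find hw
  have hl : W (i + (l : ZMod n)) ≠ W (j + (l : ZMod n)) := Nat.find_spec hw
  have hlt : ∀ t < l, W (i + (t : ZMod n)) = W (j + (t : ZMod n)) := fun t ht => by
    have := Nat.find_min hw ht
    simpa using this
  have a1 := wCompat_iter φ W hφ hn l i j hij hlt
  have a2 := wCompat_iter ψ W hψ hn l j i hji (fun t ht => (hlt t ht).symm)
  rw [← sg_congr W i j l hlt] at a2
  have hl' : (W (i + (l : ZMod n))).val ≠ (W (j + (l : ZMod n))).val := fun he => hl (Fin.ext he)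
  have b : ∀ (θ : ZMod n ≃ Fin n), wCompat n K θ W → ∀ x y, θ x < θ y → (W x).val ≤ (W y).val := by
    intro θ hθ x y hxy
    rcases hθ x y hxy with h | h <;> omega
  rcases sg_or W i l with hs | hs
  · have c1 := b φ hφ _ _ (a1.1 hs)
    have c2 := b ψ hψ _ _ (a2.1 hs)
    omega
  · have c1 := b φ hφ _ _ (a1.2 hs)
    have c2 := b ψ hψ _ _ (a2.2 hs)
    omega

/-- encoding of shifted words -/
def enc {n K : ℕ} (W : ZMod n → Fin K) (i : ZMod n) (l : ℕ) : ℤ :=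
  sg W i l * ((W (i + (l : ZMod n))).val : ℤ)

lemma enc_zero {n K : ℕ} (W : ZMod n → Fin K) (i : ZMod n) : enc W i 0 = ((W i).val : ℤ) := by
  simp [enc, sg]

lemma enc_succ {n K : ℕ} (W : ZMod n → Fin K) (i : ZMod n) (l : ℕ) :
    enc W i (l + 1) = (-1 : ℤ) ^ (W i).val * enc W (i + 1) l := by
  unfold enc
  rw [sg_succ]
  push_cast
  rw [show i + ((l : ZMod n) + 1) = i + 1 + l by ring, mul_assoc]

lemma enc_inj {n K : ℕ} (W : ZMod n → Fin K) (i j : ZMod n) (h : enc W i = enc W j) (l : ℕ) :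
    W (i + (l : ZMod n)) = W (j + (l : ZMod n)) := by
  induction l using Nat.strong_induction_on with
  | _ l ih =>
    have h1 := congrFun h l
    unfold enc at h1
    rw [sg_congr W i j l ih] at h1
    have h2 : sg W j l ≠ 0 := by rcases sg_or W j l with h | h <;> rw [h] <;> norm_num
    have h3 := mul_left_cancel₀ h2 h1
    exact Fin.ext (by exact_mod_cast h3)

lemma wCompat_exists {n K : ℕ} [NeZero n] (W : ZMod n → Fin K) (τ : ZMod n → ℤ)
    (hτ : ∀ i, τ (i + 1) = (-1 : ℤ) ^ (W i).val * τ i)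
    (hinj : ∀ i j, enc W i = enc W j → τ i = τ j → i = j) :
    ∃ φ : ZMod n ≃ Fin n, wCompat n K φ W ∧ ∀ i j, enc W i = enc W j → (φ i < φ j ↔ τ i < τ j) := by
  let key : ZMod n → (Lex (ℕ → ℤ)) ×ₗ ℤ := fun i => toLex (toLex (enc W i), τ i)
  have hkey : Function.Injective key := by
    intro i j h
    have h1 := congrArg ofLex h
    simp only [key, ofLex_toLex, Prod.mk.injEq] at h1
    exact hinj i j (toLex.injective h1.1) h1.2
  have hlt : ∀ i j, key i < key j ↔ (toLex (enc W i) < toLex (enc W j) ∨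
      (enc W i = enc W j ∧ τ i < τ j)) := by
    intro i j
    rw [Prod.Lex.lt_iff]
    simp [key]
  have hirr : ∀ x : ZMod n, ¬ (toLex (enc W x) < toLex (enc W x)) := by
    rintro x ⟨l, _, h⟩
    exact lt_irrefl _ h
  let _inst : LinearOrder (ZMod n) := LinearOrder.lift' key hkey
  have hltdef : ∀ i j : ZMod n, i < j ↔ key i < key j := fun i j => Iff.rfl
  let e : Fin n ≃o ZMod n := monoEquivOfFin (ZMod n) (ZMod.card n)
  have he : ∀ i j, e.symm.toEquiv i < e.symm.toEquiv j ↔ key i < key j := by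
    intro i j
    rw [← hltdef]
    exact e.symm.lt_iff_lt
  refine ⟨e.symm.toEquiv, ?_, ?_⟩
  · intro i j hij
    rw [he] at *
    rw [hlt] at hij
    rcases hij with hij | ⟨h1, h2⟩
    · obtain ⟨l, hl1, hl2⟩ := hij
      have hl1' : ∀ t < l, enc W i t = enc W j t := hl1
      have hl2' : enc W i l < enc W j l := hl2
      cases l with
      | zero =>
        rw [enc_zero, enc_zero] at hl2'
        exact Or.inl (by exact_mod_cast hl2')
      | succ l =>
        have h0 := hl1' 0 (by omega)
        rw [enc_zero, enc_zero] at h0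
        have h0' : (W i).val = (W j).val := by exact_mod_cast h0
        refine Or.inr ⟨h0', ?_⟩
        have h1 : ∀ t < l, enc W (i + 1) t = enc W (j + 1) t := by
          intro t ht
          have := hl1' (t + 1) (by omega)
          rw [enc_succ, enc_succ, h0'] at this
          exact mul_left_cancel₀ (by simp) this
        rw [enc_succ, enc_succ, h0'] at hl2'
        rw [h0']
        by_cases hev : Even (W j).val
        · simp only [hev, true_iff]
          rw [hev.neg_one_pow, one_mul, one_mul] at hl2'
          apply not_lt_of_gt
          rw [hlt]
          exact Or.inl ⟨l, h1, hl2'⟩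
        · simp only [hev, false_iff, not_not]
          rw [(Nat.not_even_iff_odd.1 hev).neg_one_pow] at hl2'
          rw [hlt]
          exact Or.inl ⟨l, fun t ht => (h1 t ht).symm, show enc W (j+1) l < enc W (i+1) l by linarith⟩
    · have h0' : (W i).val = (W j).val := by
        have := congrFun h1 0
        rw [enc_zero, enc_zero] at this
        exact_mod_cast this
      refine Or.inr ⟨h0', ?_⟩
      have h3 : enc W (i + 1) = enc W (j + 1) := by
        ext t
        have := congrFun h1 (t + 1)
        rw [enc_succ, enc_succ, h0'] at this
        exact mul_left_cancel₀ (by simp) this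
      have t1 := hτ i
      have t2 := hτ j
      rw [h0'] at t1
      rw [h0', hlt, h3]
      simp only [hirr, true_and, false_or]
      by_cases hev : Even (W j).val
      · rw [hev.neg_one_pow] at t1 t2
        simp only [hev, true_iff]
        linarith
      · rw [(Nat.not_even_iff_odd.1 hev).neg_one_pow] at t1 t2
        simp only [hev, false_iff, not_not]
        linarith
  · intro i j hij
    rw [he, hlt, hij]
    simp [hirr]

lemma wCompat_none {n K : ℕ} [NeZero n] (hn : 2 ≤ n) (φ : ZMod n ≃ Fin n) (W : ZMod n → Fin K)
    (hφ : wCompat n K φ W) (g : ℕ) (hg : (g : ZMod n) ≠ 0) (hper : ∀ x, W (x + g) = W x)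
    (hs : sg W 0 g = 1) : False := by
  have hper' : ∀ m : ℕ, ∀ x, W (x + (m * g : ℕ)) = W x := by
    intro m
    induction m with
    | zero => intro x; simp
    | succ m ih =>
      intro x
      rw [show x + (((m + 1) * g : ℕ) : ZMod n) = x + ((m * g : ℕ) : ZMod n) + g by push_cast; ring,
        hper, ih]
  have hsg : ∀ m : ℕ, sg W ((m * g : ℕ) : ZMod n) g = 1 := by
    intro m
    rw [← hs]
    apply sg_congr
    intro t _
    rw [add_comm, hper', zero_add]
  have hw : ∀ m m' : ℕ, ∀ t < g, W (((m * g : ℕ) : ZMod n) + (t : ZMod n)) =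
      W (((m' * g : ℕ) : ZMod n) + (t : ZMod n)) := by
    intro m m' t _
    rw [add_comm, hper', add_comm, hper']
  have hstep : ∀ m : ℕ, ((m * g : ℕ) : ZMod n) + (g : ZMod n) = (((m + 1) * g : ℕ) : ZMod n) := by
    intro m; push_cast; ring
  have hn0 : ((n * g : ℕ) : ZMod n) = ((0 * g : ℕ) : ZMod n) := by simp
  have hne : φ ((0 * g : ℕ) : ZMod n) ≠ φ ((1 * g : ℕ) : ZMod n) := by
    intro h
    have := φ.injective h
    simp at this
    exact hg this.symm
  rcases lt_or_gt_of_ne hne with h | h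
  · have : StrictMono fun m : ℕ => φ ((m * g : ℕ) : ZMod n) := by
      apply strictMono_nat_of_lt_succ
      intro m
      induction m with
      | zero => simpa using h
      | succ m ih =>
        have := (wCompat_iter φ W hφ hn g _ _ ih (hw _ _)).1 (hsg m)
        rw [hstep, hstep] at this
        exact this
    have h2 := this (show 0 < n by omega)
    simp only [hn0] at h2
    exact lt_irrefl _ h2
  · have : StrictAnti fun m : ℕ => φ ((m * g : ℕ) : ZMod n) := by
      apply strictAnti_nat_of_succ_lt
      intro m
      induction m with
      | zero => simpa using h
      | succ m ih =>
        have := (wCompat_iter φ W hφ hn g _ _ ih (hw _ _)).1 (hsg (m + 1))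
        rw [hstep, hstep] at this
        exact this
    have h2 := this (show 0 < n by omega)
    simp only [hn0] at h2
    exact lt_irrefl _ h2
def shiftW {α : Type*} (u : ℕ → α) : ℕ → α := fun l => u (l + 1)

lemma shiftW_iter {α : Type*} (g : ℕ) (u : ℕ → α) (l : ℕ) : (shiftW^[g] u) l = u (l + g) := by
  induction g generalizing u with
  | zero => rfl
  | succ g ih => rw [Function.iterate_succ_apply, ih]; simp only [shiftW]; congr 1

lemma isPer_iff {α : Type*} (g : ℕ) (u : ℕ → α) :
    Function.minimalPeriod shiftW u ∣ g ↔ ∀ l, u (l + g) = u l := by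
  rw [← Function.isPeriodicPt_iff_minimalPeriod_dvd, Function.IsPeriodicPt, Function.IsFixedPt,
    funext_iff]
  simp only [shiftW_iter]

def liftW {n : ℕ} {α : Type*} (W : ZMod n → α) : ℕ → α := fun l => W (l : ZMod n)

def usg {K : ℕ} (u : ℕ → Fin K) (l : ℕ) : ℤ := ∏ t ∈ Finset.range l, (-1 : ℤ) ^ (u t).val

lemma usg_lift {n K : ℕ} (W : ZMod n → Fin K) (l : ℕ) : usg (liftW W) l = sg W 0 l := by
  simp [usg, sg, liftW]

lemma liftW_inj {n : ℕ} [NeZero n] {α : Type*} : Function.Injective (liftW : (ZMod n → α) → _) := by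
  intro W W' h
  ext x
  have := congrFun h x.val
  simpa [liftW] using this

lemma liftW_range {n : ℕ} [NeZero n] {α : Type*} (u : ℕ → α)
    (h : Function.minimalPeriod shiftW u ∣ n) : ∃ W : ZMod n → α, liftW W = u := by
  rw [isPer_iff] at h
  refine ⟨fun x => u x.val, ?_⟩
  ext l
  simp only [liftW, ZMod.val_natCast]
  have : ∀ a b, u (b + n * a) = u b := by
    intro a
    induction a with
    | zero => simp
    | succ a ih => intro b; rw [mul_add, mul_one, ← add_assoc, h, ih]
  conv_rhs => rw [← Nat.mod_add_div l n, this]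

lemma mp_dvd_iff {n : ℕ} [NeZero n] {α : Type*} (W : ZMod n → α) (g : ℕ) :
    Function.minimalPeriod shiftW (liftW W) ∣ g ↔ ∀ x, W (x + (g : ZMod n)) = W x := by
  rw [isPer_iff]
  constructor
  · intro h x
    have := h x.val
    simpa [liftW] using this
  · intro h l
    simpa [liftW] using h l

lemma mp_dvd {n : ℕ} [NeZero n] {α : Type*} (W : ZMod n → α) :
    Function.minimalPeriod shiftW (liftW W) ∣ n := by
  rw [mp_dvd_iff]; simp

lemma per_of_words {n : ℕ} [NeZero n] {α : Type*} (W : ZMod n → α) (i j : ZMod n)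
    (h : ∀ l : ℕ, W (i + (l : ZMod n)) = W (j + (l : ZMod n))) :
    Function.minimalPeriod shiftW (liftW W) ∣ (j - i).val := by
  rw [mp_dvd_iff]
  intro x
  have := h (x - i).val
  simp only [ZMod.natCast_val, ZMod.cast_id', id_eq] at this ⊢
  rw [show i + (x - i) = x by ring, show j + (x - i) = x + (j - i) by ring] at this
  exact this.symm

lemma count_prim {n K : ℕ} [NeZero n] (hn : 2 ≤ n) (W : ZMod n → Fin K)
    (hp : Function.minimalPeriod shiftW (liftW W) = n) :
    (Finset.univ.filter fun φ : ZMod n ≃ Fin n => wCompat n K φ W).card = 1 := by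
  have hprim : ∀ i j : ZMod n, (∀ l : ℕ, W (i + (l : ZMod n)) = W (j + (l : ZMod n))) → i = j := by
    intro i j h
    have h1 := per_of_words W i j h
    rw [hp] at h1
    have h2 := Nat.eq_zero_of_dvd_of_lt h1 (ZMod.val_lt _)
    rw [ZMod.val_eq_zero] at h2
    exact (sub_eq_zero.1 h2).symm
  obtain ⟨φ, h1, -⟩ := wCompat_exists W (fun _ => 0) (by simp)
    (fun i j h _ => hprim i j (enc_inj W i j h))
  rw [Finset.card_eq_one]
  refine ⟨φ, ?_⟩
  ext ψ
  simp only [Finset.mem_filter, Finset.mem_univ, true_and, Finset.mem_singleton]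
  constructor
  · intro h
    exact wCompat_unique hn ψ φ W h h1 (fun i j hne hw => absurd (hprim i j hw) hne)
  · rintro rfl; exact h1

lemma count_half {n K : ℕ} [NeZero n] (hn : 2 ≤ n) (W : ZMod n → Fin K) (p : ℕ)
    (hp : Function.minimalPeriod shiftW (liftW W) = p) (h2p : 2 * p = n) (hs : sg W 0 p = -1) :
    (Finset.univ.filter fun φ : ZMod n ≃ Fin n => wCompat n K φ W).card = 2 := by
  have hper : ∀ x, W (x + (p : ZMod n)) = W x := (mp_dvd_iff W p).1 (by rw [hp])
  have hpp : (p : ZMod n) + p = 0 := by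
    have : ((2 * p : ℕ) : ZMod n) = 0 := by rw [h2p]; simp
    push_cast at this
    rw [← this]; ring
  have hp0 : (p : ZMod n) ≠ 0 := by
    intro h
    rw [ZMod.natCast_eq_zero_iff] at h
    have := Nat.le_of_dvd (by omega) h
    omega
  have hcls : ∀ i j : ZMod n, (∀ l : ℕ, W (i + (l : ZMod n)) = W (j + (l : ZMod n))) → i ≠ j →
      j = i + p := by
    intro i j h hne
    have h1 := per_of_words W i j h
    rw [hp] at h1
    obtain ⟨c, hc⟩ := h1
    have h3 := ZMod.val_lt (j - i)
    have h4 : c < 2 := by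
      by_contra h5
      have : p * 2 ≤ p * c := Nat.mul_le_mul_left _ (by omega)
      omega
    have h5 : c ≠ 0 := by
      rintro rfl
      rw [mul_zero, ZMod.val_eq_zero] at hc
      exact hne (sub_eq_zero.1 hc).symm
    have h6 : c = 1 := by omega
    subst h6
    have h7 : j - i = (p : ZMod n) := by
      rw [← ZMod.natCast_zmod_val (j - i), hc, mul_one]
    rw [← h7]; ring
  have hsgp : ∀ l : ℕ, sg W p l = sg W 0 l := by
    intro l
    apply sg_congr
    intro t _
    rw [add_comm, hper, zero_add]
  have hsn : sg W 0 n = 1 := by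
    have h1 : sg W 0 (2 * p) = 1 := by
      rw [two_mul, sg_add, zero_add, hsgp, hs]; norm_num
    exact (congrArg (sg W 0) h2p).symm.trans h1
  -- tie breaking function
  have hτ0 : ∀ i : ZMod n, sg W 0 (i + 1).val = (-1 : ℤ) ^ (W i).val * sg W 0 i.val := by
    intro i
    have h1 : sg W 0 (i.val + 1) = (-1 : ℤ) ^ (W i).val * sg W 0 i.val := by
      rw [sg_succ', mul_comm]; simp
    rw [← h1]
    by_cases hi : i.val + 1 < n
    · rw [ZMod.val_add_of_lt]
      · rw [ZMod.val_one'' (by omega)]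
      · rw [ZMod.val_one'' (by omega)]; exact hi
    · have h3 := ZMod.val_lt i
      have h4 : i.val + 1 = n := by omega
      have h5 : i + 1 = 0 := by
        have : ((i.val + 1 : ℕ) : ZMod n) = 0 := by rw [h4]; simp
        simpa using this
      rw [h5, h4, hsn]; simp [sg]
  have hτp : ∀ i : ZMod n, sg W 0 (i + p).val = - sg W 0 i.val := by
    have gen : ∀ l : ℕ, sg W 0 ((l : ZMod n)).val = sg W 0 l := by
      intro l
      induction l with
      | zero => simp
      | succ l ih =>
        rw [Nat.cast_succ, hτ0, ih, sg_succ', zero_add, mul_comm]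
    intro i
    have := gen (p + i.val)
    rw [sg_add, zero_add, hsgp, hs] at this
    simp only [Nat.cast_add, ZMod.natCast_val, ZMod.cast_id', id_eq] at this
    rw [add_comm, this]; ring
  have hex : ∀ ε : ℤ, ε ≠ 0 → ∃ φ : ZMod n ≃ Fin n, wCompat n K φ W ∧ (φ 0 < φ p ↔ ε < 0) := by
    intro ε hε
    obtain ⟨φ, h1, h2⟩ := wCompat_exists W (fun i => ε * sg W 0 i.val)
      (by intro i; simp only [hτ0]; ring) (by
        intro i j he ht
        by_contra hne
        have := hcls i j (enc_inj W i j he) hne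
        simp only [this, hτp] at ht
        rcases sg_or W 0 i.val with h | h <;> rw [h] at ht <;> omega)
    refine ⟨φ, h1, ?_⟩
    rw [h2]
    · have e1 := hτp 0
      rw [zero_add] at e1
      rw [e1]
      simp only [ZMod.val_zero, sg_zero]
      constructor <;> intro h <;> linarith
    · ext l
      unfold enc
      rw [hsgp, add_comm (p : ZMod n), hper, zero_add]
  obtain ⟨φ1, a1, b1⟩ := hex 1 (by norm_num)
  obtain ⟨φ2, a2, b2⟩ := hex (-1) (by norm_num)
  norm_num at b1 b2
  have hne : φ1 ≠ φ2 := by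
    rintro rfl
    exact absurd b2 (not_lt.2 b1)
  have huniq : ∀ φ ψ : ZMod n ≃ Fin n, wCompat n K φ W → wCompat n K ψ W →
      (φ 0 < φ p ↔ ψ 0 < ψ p) → φ = ψ := by
    intro φ ψ h1 h2 h3
    apply wCompat_unique hn φ ψ W h1 h2
    intro i j hne hw hij
    have hj := hcls i j hw hne
    by_contra hc
    have hji : ψ j < ψ i := lt_of_le_of_ne (not_lt.1 hc) (fun he => hne (ψ.injective he).symm)
    have c1 := wCompat_iter φ W h1 hn (-i).val i j hij (fun t _ => hw t)
    have c2 := wCompat_iter ψ W h2 hn (-i).val j i hji (fun t _ => (hw t).symm)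
    rw [← sg_congr W i j _ (fun t _ => hw t)] at c2
    simp only [ZMod.natCast_val, ZMod.cast_id', id_eq] at c1 c2
    rw [hj, show i + (p : ZMod n) + -i = p by ring, add_neg_cancel] at c1 c2
    rcases sg_or W i (-i).val with hs | hs
    · exact lt_asymm (h3.1 (c1.1 hs)) (c2.1 hs)
    · exact lt_asymm (h3.2 (c2.2 hs)) (c1.2 hs)
  rw [Finset.card_eq_two]
  refine ⟨φ1, φ2, hne, ?_⟩
  ext ψ
  simp only [Finset.mem_filter, Finset.mem_univ, true_and, Finset.mem_insert, Finset.mem_singleton]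
  constructor
  · intro h
    by_cases h0 : ψ 0 < ψ p
    · right; exact huniq _ _ h a2 (by simp [h0, b2])
    · left; exact huniq _ _ h a1 (by simp [h0, b1])
  · rintro (rfl | rfl)
    · exact a1
    · exact a2

lemma count_all {n K : ℕ} [NeZero n] (hn : 2 ≤ n) (W : ZMod n → Fin K) :
    (Finset.univ.filter fun φ : ZMod n ≃ Fin n => wCompat n K φ W).card =
    (if Function.minimalPeriod shiftW (liftW W) = n then 1 else 0) +
    (if 2 * Function.minimalPeriod shiftW (liftW W) = n ∧
      usg (liftW W) (Function.minimalPeriod shiftW (liftW W)) = -1 then 2 else 0) := by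
  rw [usg_lift]
  have hd := mp_dvd W
  have hper := mp_dvd_iff W
  have c1 := count_prim hn W
  have c2 := count_half hn W
  generalize Function.minimalPeriod shiftW (liftW W) = p at *
  by_cases h1 : p = n
  · rw [c1 h1, if_pos h1, if_neg (by omega)]
  · rw [if_neg h1]
    by_cases h2 : 2 * p = n ∧ sg W 0 p = -1
    · rw [if_pos h2, c2 p rfl h2.1 h2.2]
    · rw [if_neg h2, add_zero, Finset.card_eq_zero, Finset.filter_eq_empty_iff]
      intro φ _ hφ
      have hnpos : 0 < n := by omega
      have hple := Nat.le_of_dvd hnpos hd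
      have hppos := Nat.pos_of_dvd_of_pos hd hnpos
      have hpe := (hper p).1 dvd_rfl
      rcases sg_or W 0 p with hs | hs
      · refine wCompat_none hn φ W hφ p ?_ hpe hs
        intro h
        rw [ZMod.natCast_eq_zero_iff] at h
        have := Nat.le_of_dvd hppos h
        omega
      · refine wCompat_none hn φ W hφ (2 * p) ?_ ((hper (2 * p)).1 (Dvd.intro_left 2 rfl)) ?_
        · intro h
          rw [ZMod.natCast_eq_zero_iff] at h
          obtain ⟨c, hc⟩ := hd
          have hc2 : 2 ≤ c := by
            by_contra h5
            have : c = 0 ∨ c = 1 := by omega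
            rcases this with rfl | rfl <;> omega
          have h6 := Nat.le_of_dvd (by omega) h
          have h7 : p * 2 ≤ p * c := Nat.mul_le_mul_left _ hc2
          exact h2 ⟨by omega, hs⟩
        · rw [two_mul, sg_add, zero_add, hs]
          have : sg W (p : ZMod n) p = sg W 0 p := by
            apply sg_congr
            intro t _
            rw [add_comm, hpe, zero_add]
          rw [this, hs]; norm_num
def cw {K : ℕ} (n : ℕ) (u : ℕ → Fin K) : ℤ :=
  (if Function.minimalPeriod shiftW u = n then 1 else 0) +
    (if 2 * Function.minimalPeriod shiftW u = n ∧
      usg u (Function.minimalPeriod shiftW u) = -1 then 2 else 0)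

def XN (K N : ℕ) [NeZero N] : Finset (ℕ → Fin K) :=
  Finset.univ.image (liftW : (ZMod N → Fin K) → (ℕ → Fin K))

lemma mem_XN (K N : ℕ) [NeZero N] (u : ℕ → Fin K) :
    u ∈ XN K N ↔ Function.minimalPeriod shiftW u ∣ N := by
  simp only [XN, Finset.mem_image, Finset.mem_univ, true_and]
  constructor
  · rintro ⟨W, rfl⟩; exact mp_dvd W
  · exact liftW_range u

lemma sum_XN (K N : ℕ) [NeZero N] (F : (ℕ → Fin K) → ℤ) :
    ∑ u ∈ XN K N, F u = ∑ W : ZMod N → Fin K, F (liftW W) := by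
  unfold XN
  rw [Finset.sum_image (fun a _ b _ h => liftW_inj h)]

def Tz (K n : ℕ) : ℤ := ∑ᶠ u : ℕ → Fin K, cw n u

lemma Tz_eq (K n N : ℕ) [NeZero N] (h : n ∣ N) : Tz K n = ∑ u ∈ XN K N, cw n u := by
  apply finsum_eq_sum_of_support_subset
  intro u hu
  rw [Finset.mem_coe, mem_XN]
  by_contra hc
  apply hu
  unfold cw
  rw [if_neg, if_neg]
  · rfl
  · rintro ⟨h1, _⟩
    exact hc (Dvd.dvd.trans (Dvd.intro_left 2 h1) h)
  · rintro rfl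
    exact hc h

lemma usg_or {K : ℕ} (u : ℕ → Fin K) (l : ℕ) : usg u l = 1 ∨ usg u l = -1 := by
  induction l with
  | zero => left; simp [usg]
  | succ l ih =>
    have : usg u (l + 1) = usg u l * (-1 : ℤ) ^ (u l).val := by
      unfold usg; rw [Finset.prod_range_succ]
    rw [this]
    rcases ih with h | h <;> rcases neg_one_pow_eq_or ℤ (u l).val with h' | h' <;>
      simp [h, h']

lemma usg_mul {K : ℕ} (u : ℕ → Fin K) (p c : ℕ) (h : ∀ l, u (l + p) = u l) :
    usg u (p * c) = usg u p ^ c := by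
  have hp : ∀ c l, u (p * c + l) = u l := by
    intro c
    induction c with
    | zero => simp
    | succ c ih => intro l; rw [← ih l, ← h (p * c + l)]; congr 1; ring
  induction c with
  | zero => simp [usg]
  | succ c ih =>
    rw [pow_succ, ← ih]
    unfold usg
    rw [mul_add, mul_one, Finset.prod_range_add]
    congr 1
    apply Finset.prod_congr rfl
    intro t _
    rw [hp]

lemma sum_cw_odd {K : ℕ} (m : ℕ) (hm : Odd m) (u : ℕ → Fin K)
    (hu : Function.minimalPeriod shiftW u ∣ m) : ∑ e ∈ m.divisors, cw e u = 1 := by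
  unfold cw
  rw [Finset.sum_add_distrib, Finset.sum_ite_eq, if_pos (Nat.mem_divisors.2 ⟨hu, hm.pos.ne'⟩),
    Finset.sum_eq_zero, add_zero]
  intro e he
  rw [if_neg]
  rintro ⟨h1, -⟩
  have := Odd.of_dvd_nat hm (Nat.dvd_of_mem_divisors he)
  rw [← h1] at this
  exact (Nat.not_odd_iff_even.2 (even_two_mul _)) this

lemma sum_cw_even {K : ℕ} (j m : ℕ) (hm : Odd m) (u : ℕ → Fin K)
    (hu : Function.minimalPeriod shiftW u ∣ 2 ^ (j + 1) * m) :
    ∑ e ∈ m.divisors, cw (2 ^ (j + 1) * e) u = 1 -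
      if Function.minimalPeriod shiftW u ∣ 2 ^ j * m then usg u (2 ^ j * m) else 0 := by
  have hper : ∀ c, usg u (Function.minimalPeriod shiftW u * c) =
      usg u (Function.minimalPeriod shiftW u) ^ c :=
    fun c => usg_mul u _ c ((isPer_iff _ u).1 dvd_rfl)
  unfold cw
  generalize Function.minimalPeriod shiftW u = p at *
  obtain ⟨y, o, hy, ho, rfl⟩ := (Nat.dvd_mul).1 hu
  obtain ⟨i, hi, rfl⟩ := (Nat.dvd_prime_pow Nat.prime_two).1 hy
  have hoo : Odd o := Odd.of_dvd_nat hm ho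
  have hod : o ∈ m.divisors := Nat.mem_divisors.2 ⟨ho, hm.pos.ne'⟩
  have hdo : ∀ e ∈ m.divisors, Odd e := fun e he => Odd.of_dvd_nat hm (Nat.dvd_of_mem_divisors he)
  have hcan : ∀ a b c : ℕ, 2 ^ a * b = 2 ^ a * c ↔ b = c := by
    intro a b c
    exact Nat.mul_right_inj (by positivity)
  rw [Finset.sum_add_distrib]
  obtain ⟨r, hr⟩ : ∃ r, j + 1 = i + r := ⟨j + 1 - i, by omega⟩
  obtain ⟨q, hq⟩ := ho
  have hqo : Odd q := Odd.of_dvd_nat hm ⟨o, by rw [hq]; ring⟩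
  match r, hr with
  | 0, hr =>
    have hi : i = j + 1 := by omega
    subst hi
    simp only [hcan]
    rw [Finset.sum_ite_eq, if_pos hod, Finset.sum_eq_zero, if_neg]
    · simp
    · rw [pow_succ, mul_assoc, Nat.mul_dvd_mul_iff_left (by positivity)]
      intro h
      have h2 : 2 ∣ m := (Dvd.intro _ rfl).trans h
      exact (Nat.not_even_iff_odd.2 hm) (even_iff_two_dvd.2 h2)
    · intro e he
      rw [if_neg]
      rintro ⟨h1, -⟩
      rw [show 2 * (2 ^ (j + 1) * o) = 2 ^ (j + 1) * (2 * o) by ring, hcan] at h1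
      have := hdo e he
      rw [← h1] at this
      exact (Nat.not_odd_iff_even.2 (even_two_mul _)) this
  | 1, hr =>
    have hi : i = j := by omega
    subst hi
    have e1 : ∀ e, 2 ^ i * o = 2 ^ (i + 1) * e ↔ o = 2 * e := by
      intro e; rw [pow_succ, mul_assoc, hcan]
    have e2 : ∀ e, 2 * (2 ^ i * o) = 2 ^ (i + 1) * e ↔ o = e := by
      intro e; rw [show 2 * (2 ^ i * o) = 2 ^ (i + 1) * o by ring, hcan]
    simp only [e1, e2]
    rw [Finset.sum_eq_zero, if_pos (Nat.mul_dvd_mul_left _ ⟨q, hq⟩)]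
    · have h3 : usg u (2 ^ i * m) = usg u (2 ^ i * o) := by
        rw [hq, ← mul_assoc, hper]
        rcases usg_or u (2 ^ i * o) with h | h
        · rw [h, one_pow]
        · rw [h, hqo.neg_one_pow]
      rw [h3]
      rcases usg_or u (2 ^ i * o) with h | h
      · rw [h]; simp
      · rw [h]; simp [hod, Finset.sum_ite_eq]
    · intro e _
      rw [if_neg]
      rintro rfl
      exact (Nat.not_odd_iff_even.2 (even_two_mul _)) hoo
  | r + 2, hr =>
    have hj : j = i + r + 1 := by omega
    subst hj
    have e1 : ∀ e, 2 ^ i * o = 2 ^ (i + r + 1 + 1) * e ↔ o = 2 * (2 ^ (r + 1) * e) := by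
      intro e
      rw [show 2 ^ (i + r + 1 + 1) * e = 2 ^ i * (2 * (2 ^ (r + 1) * e)) by ring, hcan]
    have e2 : ∀ e, 2 * (2 ^ i * o) = 2 ^ (i + r + 1 + 1) * e ↔ o = 2 * (2 ^ r * e) := by
      intro e
      rw [show 2 ^ (i + r + 1 + 1) * e = 2 ^ (i + 1) * (2 * (2 ^ r * e)) by ring,
        show 2 * (2 ^ i * o) = 2 ^ (i + 1) * o by ring, hcan]
    have hno : ∀ x, o ≠ 2 * x := by
      rintro x rfl
      exact (Nat.not_odd_iff_even.2 (even_two_mul _)) hoo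
    have e3 : 2 ^ (i + r + 1) * m = 2 ^ i * o * (2 * (2 ^ r * q)) := by rw [hq]; ring
    simp only [e1, e2, hno]
    rw [e3, if_pos (Dvd.intro _ rfl), hper, pow_mul]
    rcases usg_or u (2 ^ i * o) with h | h <;> rw [h] <;> simp

lemma sum_sgn_fin (k : ℕ) : ∑ a : Fin (2 * k + 1), (-1 : ℤ) ^ a.val = 1 := by
  rw [Fin.sum_univ_eq_sum_range (fun a => (-1 : ℤ) ^ a)]
  induction k with
  | zero => simp
  | succ k ih =>
    rw [show 2 * (k + 1) + 1 = 2 * k + 1 + 1 + 1 by ring, Finset.sum_range_succ,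
      Finset.sum_range_succ, ih]
    rw [pow_succ (-1 : ℤ) (2 * k + 1)]; ring

lemma sum_usg (k M : ℕ) [NeZero M] : ∑ u ∈ XN (2 * k + 1) M, usg u M = 1 := by
  rw [sum_XN]
  have h : ∀ W : ZMod M → Fin (2 * k + 1), usg (liftW W) M = ∏ x, (-1 : ℤ) ^ (W x).val := by
    intro W
    unfold usg liftW
    refine Finset.prod_bij' (fun (t : ℕ) _ => ((t : ℕ) : ZMod M)) (fun (x : ZMod M) _ => x.val)
      ?_ ?_ ?_ ?_ ?_
    · intro t ht; simp
    · intro x _; simpa using ZMod.val_lt x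
    · intro t ht; exact ZMod.val_cast_of_lt (Finset.mem_range.1 ht)
    · intro x _; simp
    · intro t _; rfl
  simp only [h]
  have h2 := Finset.sum_prod_piFinset (ι := ZMod M) (Finset.univ : Finset (Fin (2 * k + 1)))
    (fun _ a => (-1 : ℤ) ^ a.val)
  rw [Fintype.piFinset_univ] at h2
  rw [h2, sum_sgn_fin]
  simp

lemma sum_Tz (k j m : ℕ) (hm : Odd m) :
    ∑ e ∈ m.divisors, Tz (2 * k + 1) (2 ^ j * e) =
      ((2 * k + 1 : ℕ) : ℤ) ^ (2 ^ j * m) - if j = 0 then 0 else 1 := by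
  have hm0 := hm.pos
  haveI : NeZero (2 ^ j * m) := ⟨by positivity⟩
  have hcard : ∑ u ∈ XN (2 * k + 1) (2 ^ j * m), (1 : ℤ) =
      ((2 * k + 1 : ℕ) : ℤ) ^ (2 ^ j * m) := by
    rw [sum_XN]; simp
  rw [Finset.sum_congr rfl (fun e he => Tz_eq (2 * k + 1) (2 ^ j * e) (2 ^ j * m)
    (Nat.mul_dvd_mul_left _ (Nat.dvd_of_mem_divisors he))), Finset.sum_comm, ← hcard]
  cases j with
  | zero =>
    rw [if_pos rfl, sub_zero]
    apply Finset.sum_congr rfl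
    intro u hu
    rw [mem_XN] at hu
    simp only [pow_zero, one_mul] at hu ⊢
    exact sum_cw_odd m hm u hu
  | succ j =>
    haveI : NeZero (2 ^ j * m) := ⟨by positivity⟩
    rw [if_neg (by omega)]
    rw [Finset.sum_congr rfl (fun u hu => sum_cw_even j m hm u ((mem_XN _ _ u).1 hu)),
      Finset.sum_sub_distrib, ← Finset.sum_filter]
    congr 1
    refine Eq.trans ?_ (sum_usg k (2 ^ j * m))
    apply Finset.sum_congr _ (fun _ _ => rfl)
    ext u
    rw [Finset.mem_filter, mem_XN, mem_XN]
    constructor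
    · exact fun h => h.2
    · exact fun h => ⟨h.trans ⟨2, by ring⟩, h⟩

lemma Tz_moebius (k j m : ℕ) (hm : Odd m) :
    Tz (2 * k + 1) (2 ^ j * m) = ∑ d ∈ m.divisors, ArithmeticFunction.moebius d *
      (((2 * k + 1 : ℕ) : ℤ) ^ (2 ^ j * (m / d)) - if j = 0 then 0 else 1) := by
  have h := (ArithmeticFunction.sum_eq_iff_sum_mul_moebius_eq_on
    (f := fun e => Tz (2 * k + 1) (2 ^ j * e))
    (g := fun e => ((2 * k + 1 : ℕ) : ℤ) ^ (2 ^ j * e) - if j = 0 then 0 else 1)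
    {e | Odd e} (fun a b hab hb => Odd.of_dvd_nat hb hab)).1
    (fun e _ he => sum_Tz k j e he) m hm.pos hm
  simp only [Int.cast_id] at h
  rw [← h, Nat.sum_divisorsAntidiagonal (fun a b => ArithmeticFunction.moebius a *
      (((2 * k + 1 : ℕ) : ℤ) ^ (2 ^ j * b) - if j = 0 then 0 else 1))]

lemma sum_counts (n k : ℕ) [NeZero n] (hn : 2 ≤ n) :
    ((∑ φ : ZMod n ≃ Fin n, (Finset.univ.filter fun f : Fin n → Fin (2 * k + 1) =>
        adjCompat n (2 * k + 1) (conjCyc n φ) f).card : ℕ) : ℤ) = Tz (2 * k + 1) n := by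
  rw [sum_swap, Tz_eq _ n n dvd_rfl, sum_XN]
  push_cast
  apply Finset.sum_congr rfl
  intro W _
  rw [count_all hn W]
  unfold cw
  push_cast
  rfl

lemma lhs_series (n : ℕ) (hn : 2 ≤ n) :
    (((n : Polynomial ℚ) * ∑ π ∈ cyclicSet n,
              (4 : Polynomial ℚ) ^ lpk n π * Polynomial.X ^ lpk n π
                * (1 + Polynomial.X) ^ (n - 2 * lpk n π) : Polynomial ℚ) : PowerSeries ℚ) =
    (1 - PowerSeries.X) ^ (n + 1) * PowerSeries.mk fun k => (Tz (2 * k + 1) n : ℚ) := by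
  haveI : NeZero n := ⟨by omega⟩
  have h1 : (((n : Polynomial ℚ) * ∑ π ∈ cyclicSet n,
              (4 : Polynomial ℚ) ^ lpk n π * Polynomial.X ^ lpk n π
                * (1 + Polynomial.X) ^ (n - 2 * lpk n π) : Polynomial ℚ) : PowerSeries ℚ) =
      (n : PowerSeries ℚ) * ∑ π ∈ cyclicSet n, (4 : PowerSeries ℚ) ^ lpk n π *
        PowerSeries.X ^ lpk n π * (1 + PowerSeries.X) ^ (n - 2 * lpk n π) := by
    have h4 : Polynomial.coeToPowerSeries.ringHom (R := ℚ) 4 = 4 := map_ofNat _ 4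
    have hX : Polynomial.coeToPowerSeries.ringHom (R := ℚ) Polynomial.X = PowerSeries.X := by simp
    rw [← Polynomial.coeToPowerSeries.ringHom_apply]
    simp only [map_mul, map_sum, map_pow, map_add, map_one, map_natCast, h4, hX]
  rw [h1, ← sum_conj n hn]
  simp only [adjCompat_gf n hn]
  rw [← Finset.mul_sum]
  congr 1
  ext k
  rw [map_sum]
  simp only [PowerSeries.coeff_mk]
  rw [← sum_counts n k hn]
  push_cast
  rfl

theorem stmt6 (n : ℕ) (hn : 2 ≤ n) (B : ℕ → Polynomial ℚ)
    (hB : ∀ m : ℕ, ((B m : PowerSeries ℚ))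
      = (1 - PowerSeries.X) ^ (m + 1)
          * PowerSeries.mk (fun k => ((2 * k + 1 : ℕ) : ℚ) ^ m)) :
    ((∃ j : ℕ, n = 2 ^ j) →
      (n : Polynomial ℚ)
          * ∑ π ∈ cyclicSet n,
              (4 : Polynomial ℚ) ^ lpk n π * Polynomial.X ^ lpk n π
                * (1 + Polynomial.X) ^ (n - 2 * lpk n π)
        = B n - (1 - Polynomial.X) ^ n) ∧
    (¬ (∃ j : ℕ, n = 2 ^ j) →
      (n : Polynomial ℚ)
          * ∑ π ∈ cyclicSet n,
              (4 : Polynomial ℚ) ^ lpk n π * Polynomial.X ^ lpk n π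
                * (1 + Polynomial.X) ^ (n - 2 * lpk n π)
        = ∑ d ∈ n.divisors.filter (fun d => Odd d),
            ((ArithmeticFunction.moebius d : ℤ) : Polynomial ℚ)
              * (1 - Polynomial.X) ^ (n - n / d) * B (n / d)) := by
  have hn0 : n ≠ 0 := by omega
  obtain ⟨j, m, hm, hjm⟩ := Nat.exists_eq_two_pow_mul_odd hn0
  have hdiv : n.divisors.filter (fun d => Odd d) = m.divisors := by
    ext d
    simp only [Finset.mem_filter, Nat.mem_divisors]
    constructor
    · rintro ⟨⟨h1, -⟩, h2⟩
      refine ⟨?_, hm.pos.ne'⟩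
      rw [hjm] at h1
      exact (Nat.Coprime.pow_right j h2.coprime_two_right).dvd_of_dvd_mul_left h1
    · rintro ⟨h1, -⟩
      exact ⟨⟨h1.trans ⟨2 ^ j, by rw [hjm]; ring⟩, hn0⟩, Odd.of_dvd_nat hm h1⟩
  have hone : (1 - PowerSeries.X : PowerSeries ℚ) * PowerSeries.mk (fun _ => (1 : ℚ)) = 1 := by
    apply one_sub_mul_ext
    · simp
    · intro k; simp [PowerSeries.coeff_one]
  have hXc : ((1 - Polynomial.X : Polynomial ℚ) : PowerSeries ℚ) = 1 - PowerSeries.X := by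
    rw [← Polynomial.coeToPowerSeries.ringHom_apply, map_sub, map_one]; simp
  constructor
  · rintro ⟨i, hi⟩
    have hm1 : m = 1 := by
      have h1 : m ∣ 2 ^ i := ⟨2 ^ j, by rw [← hi, hjm]; ring⟩
      exact Nat.Coprime.eq_one_of_dvd (Nat.Coprime.pow_right i hm.coprime_two_right) h1
    have hj : j ≠ 0 := by rintro rfl; subst hm1; omega
    apply Polynomial.coe_injective ℚ
    rw [lhs_series n hn, Polynomial.coe_sub, Polynomial.coe_pow, hXc, hB]
    have hT : ∀ k, (Tz (2 * k + 1) n : ℚ) = ((2 * k + 1 : ℕ) : ℚ) ^ n - 1 := by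
      intro k
      rw [hjm, Tz_moebius k j m hm, hm1]
      simp [hj]
    have e : (PowerSeries.mk fun k => (Tz (2 * k + 1) n : ℚ)) =
        PowerSeries.mk (fun k => ((2 * k + 1 : ℕ) : ℚ) ^ n) - PowerSeries.mk (fun _ => (1 : ℚ)) := by
      ext k
      rw [map_sub]
      simp only [PowerSeries.coeff_mk]
      exact hT k
    rw [e]
    linear_combination (-(1 - PowerSeries.X : PowerSeries ℚ) ^ n) * hone
  · intro hnp
    have hm1 : m ≠ 1 := by rintro rfl; exact hnp ⟨j, by simpa using hjm⟩
    have hmu : ∑ d ∈ m.divisors, ArithmeticFunction.moebius d = 0 := by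
      have h1 := congrArg (fun F : ArithmeticFunction ℤ => F m)
        ArithmeticFunction.coe_zeta_mul_moebius
      simp only [ArithmeticFunction.coe_zeta_mul_apply] at h1
      rw [h1, ArithmeticFunction.one_apply_ne hm1]
    apply Polynomial.coe_injective ℚ
    rw [lhs_series n hn, hdiv]
    have hterm : ((∑ d ∈ m.divisors, ((ArithmeticFunction.moebius d : ℤ) : Polynomial ℚ)
              * (1 - Polynomial.X) ^ (n - n / d) * B (n / d) : Polynomial ℚ) : PowerSeries ℚ) =
        (1 - PowerSeries.X) ^ (n + 1) * ∑ d ∈ m.divisors,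
          ((ArithmeticFunction.moebius d : ℤ) : PowerSeries ℚ) *
            PowerSeries.mk (fun k => ((2 * k + 1 : ℕ) : ℚ) ^ (n / d)) := by
      rw [← Polynomial.coeToPowerSeries.ringHom_apply, map_sum, Finset.mul_sum]
      apply Finset.sum_congr rfl
      intro d _
      rw [map_mul, map_mul, map_pow, map_intCast, Polynomial.coeToPowerSeries.ringHom_apply,
        Polynomial.coeToPowerSeries.ringHom_apply, hXc, hB]
      have h3 : n + 1 = (n - n / d) + (n / d + 1) := by
        have := Nat.div_le_self n d
        omega
      rw [h3, pow_add]
      ring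
    rw [hterm]
    congr 1
    ext k
    rw [map_sum, PowerSeries.coeff_mk]
    have h5 : Tz (2 * k + 1) n = ∑ d ∈ m.divisors, ArithmeticFunction.moebius d *
        ((2 * k + 1 : ℕ) : ℤ) ^ (n / d) := by
      have h6 := Tz_moebius k j m hm
      rw [← hjm] at h6
      rw [h6]
      simp only [mul_sub, Finset.sum_sub_distrib]
      rw [← Finset.sum_mul, hmu, zero_mul, sub_zero]
      apply Finset.sum_congr rfl
      intro d hd
      rw [hjm, Nat.mul_div_assoc _ (Nat.dvd_of_mem_divisors hd)]
    rw [h5]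
    push_cast
    apply Finset.sum_congr rfl
    intro d _
    have h7 : ((ArithmeticFunction.moebius d : ℤ) : PowerSeries ℚ) =
        PowerSeries.C ((ArithmeticFunction.moebius d : ℤ) : ℚ) := by simp
    rw [h7, PowerSeries.coeff_C_mul, PowerSeries.coeff_mk]

end
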